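/- Let f : ℝ² → ℝ be of class C² satisfying (i) D²f(p)(q,q) > 0 for all p, q ∈ ℝ² with q ≠ 0, and (ii) there is a constant Λ > 0 with |D²f(p)| ≤ Λ/(1+|p|) for all p ∈ ℝ². Let u ∈ C²(ℝ²) be an entire solution of div[Df(∇u)] = 0 on ℝ². Suppose there exist two linearly independent vectors E₁, E₂ ∈ ℝ² and a constant K > 0 such that |∂_{E₁}u(x)| · ln²(1+|∂_{E₁}u(x)|) ≤ K(|∂_{E₂}u(x)| + 1) for all x ∈ ℝ², where ∂_{E_α}u denotes the directional derivative of u in direction E_α. Then u is an affine function. -/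

import Mathlib

open Real MeasureTheory Metric
open scoped ENNReal

noncomputable section

/-- `ℝ²` with its Euclidean structure. -/
abbrev E2 : Type := EuclideanSpace ℝ (Fin 2)

/-- The `i`-th standard basis vector of `ℝ²`. -/
def ee (i : Fin 2) : E2 := EuclideanSpace.single i 1

/-- The Hessian bilinear form `D²f(p)(q,q)`. -/
def Hess (f : E2 → ℝ) (p q : E2) : ℝ := iteratedFDeriv ℝ 2 f p ![q, q]

/-- The partial derivative `∂ᵢu(x)`. -/
def pd (u : E2 → ℝ) (i : Fin 2) (x : E2) : ℝ := fderiv ℝ u x (ee i)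

/-- The equation `div [Df(∇u)] = 0`, i.e. `∑ i, ∂ᵢ[(∂f/∂pᵢ)(∇u(x))] = 0` on `ℝ²`. -/
def solves (f u : E2 → ℝ) : Prop :=
  ∀ x : E2, ∑ i : Fin 2, fderiv ℝ (fun y => fderiv ℝ f (gradient u y) (ee i)) x (ee i) = 0

/-!
A directional derivative `v = ∂_E u` solves the linearized equation `div (D²f(∇u) ∇v) = 0`. Test it
with `η² Φ(v)`, where `Φ` is bounded and increasing: this gives a Caccioppoli inequality for the
energy density `Φ'(v) D²f(∇u)(∇v, ∇v)`, with a constant that only sees the ratio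
`|D²f(∇u)| / Φ'(v)`. The growth condition makes this ratio bounded for `E = E₁` and
`Φ = arctan ∘ arsinh`. In the plane the Dirichlet energy of a cut-off function does not depend on
its scale, so the total energy is finite, and hole filling makes it vanish: `∇v = 0`. Hence `D²u` is
symmetric and singular, thus a multiple of some `n ⊗ n`, and the equation, which reads
`tr (D²f(∇u) D²u) = 0`, forces the multiple to be `0` by ellipticity.
-/

section IntegralInequalities

theorem sq_integral_le_integral_mul_integral {α : Type*} [MeasurableSpace α] {μ : Measure α}
    {F P Q : α → ℝ} (hP : Integrable P μ) (hQ : Integrable Q μ) (hP0 : ∀ x, 0 ≤ P x)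
    (hQ0 : ∀ x, 0 ≤ Q x) (h : ∀ x, F x ^ 2 ≤ P x * Q x) :
    (∫ x, F x ∂μ) ^ 2 ≤ (∫ x, P x ∂μ) * ∫ x, Q x ∂μ := by
  have hPI : 0 ≤ ∫ x, P x ∂μ := integral_nonneg hP0
  have hQI : 0 ≤ ∫ x, Q x ∂μ := integral_nonneg hQ0
  by_cases hF : Integrable F μ
  · have hquad : ∀ x t, 0 ≤ P x * (t * t) + 2 * F x * t + Q x := by
      intro x t
      rcases (hP0 x).eq_or_lt with hPx | hPx
      · have hFx : F x = 0 := by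
          have := h x
          rw [← hPx, zero_mul] at this
          exact pow_eq_zero_iff two_ne_zero |>.1 (le_antisymm this (sq_nonneg _))
        simp [← hPx, hFx, hQ0 x]
      · refine nonneg_of_mul_nonneg_right ?_ hPx
        nlinarith [sq_nonneg (P x * t + F x), h x]
    have hlin : ∀ t, Integrable (fun x => P x * (t * t) + 2 * F x * t) μ := fun t =>
      (hP.mul_const _).add ((hF.const_mul 2).mul_const t)
    have hdiscrim : discrim (∫ x, P x ∂μ) (2 * ∫ x, F x ∂μ) (∫ x, Q x ∂μ) ≤ 0 := by
      refine discrim_le_zero fun t => ?_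
      have ht : 0 ≤ ∫ x, (P x * (t * t) + 2 * F x * t + Q x) ∂μ :=
        integral_nonneg fun x => hquad x t
      rwa [integral_add (hlin t) hQ,
        integral_add (hP.mul_const _) ((hF.const_mul 2).mul_const t), integral_mul_const,
        integral_mul_const, integral_const_mul] at ht
    rw [discrim] at hdiscrim
    linarith
  · rw [integral_undef hF, zero_pow two_ne_zero]
    positivity

theorem nonpos_of_sq_le_mul_succ_sub {a : ℕ → ℝ} {c : ℝ} (hmono : Monotone a)
    (hbdd : BddAbove (Set.range a)) (h : ∀ n, a n ^ 2 ≤ c * (a (n + 1) - a n)) (n : ℕ) :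
    a n ≤ 0 := by
  have hlim := tendsto_atTop_ciSup hmono hbdd
  have hsq : (⨆ k, a k) ^ 2 ≤ c * ((⨆ k, a k) - ⨆ k, a k) :=
    le_of_tendsto_of_tendsto' (hlim.pow 2)
      ((((Filter.tendsto_add_atTop_iff_nat 1).2 hlim).sub hlim).const_mul c) h
  rw [sub_self, mul_zero] at hsq
  have hsup : ⨆ k, a k = 0 := pow_eq_zero_iff two_ne_zero |>.1 (le_antisymm hsq (sq_nonneg _))
  exact hsup ▸ le_ciSup hbdd n

end IntegralInequalities

theorem fderiv_eq_zero_of_notMem_Ioo {E : Type*} [NormedAddCommGroup E] [NormedSpace ℝ E]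
    {η : E → ℝ} (h : ∀ x, η x ∈ Set.Icc 0 1) {x : E} (hx : η x ∉ Set.Ioo 0 1) :
    fderiv ℝ η x = 0 := by
  rcases (h x).1.eq_or_lt with h0 | h0
  · exact IsLocalMin.fderiv_eq_zero (.of_forall fun y => h0 ▸ (h y).1)
  · have h1 : 1 ≤ η x := not_lt.1 fun h1 => hx ⟨h0, h1⟩
    exact IsLocalMax.fderiv_eq_zero (.of_forall fun y => (h y).2.trans h1)

/-- In dimension `2` this is the conformal invariance of the Dirichlet energy. -/
theorem integral_norm_fderiv_comp_smul_pow_finrank {E : Type*} [NormedAddCommGroup E]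
    [NormedSpace ℝ E] [FiniteDimensional ℝ E] [MeasurableSpace E] [BorelSpace E]
    (μ : Measure E) [μ.IsAddHaarMeasure] (φ : E → ℝ) {s : ℝ} (hs : s ≠ 0) :
    ∫ x, ‖fderiv ℝ (fun y => φ (s • y)) x‖ ^ Module.finrank ℝ E ∂μ =
      ∫ x, ‖fderiv ℝ φ x‖ ^ Module.finrank ℝ E ∂μ := by
  simp_rw [fderiv_comp_smul, norm_smul, mul_pow]
  rw [integral_const_mul,
    Measure.integral_comp_smul μ (fun x => ‖fderiv ℝ φ x‖ ^ Module.finrank ℝ E) s, smul_eq_mul,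
    ← mul_assoc, abs_inv, abs_pow, Real.norm_eq_abs,
    mul_inv_cancel₀ (pow_ne_zero _ (abs_ne_zero.2 hs)), one_mul]

section Cutoff

variable {E : Type*} [NormedAddCommGroup E] [NormedSpace ℝ E] [HasContDiffBump E]

/-- A smooth cut-off function equal to `1` on the ball of radius `R` and to `0` off the ball of
radius `2 * R`. All of them are dilations of one fixed bump function, so that their Dirichlet
energies can be compared. -/
def cutoff (R : ℝ) (x : E) : ℝ := (⟨1, 2, one_pos, one_lt_two⟩ : ContDiffBump (0 : E)) (R⁻¹ • x)

theorem contDiff_cutoff (R : ℝ) : ContDiff ℝ 1 (cutoff R : E → ℝ) :=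
  (ContDiffBump.contDiff _).comp (contDiff_const_smul _)

theorem cutoff_mem_Icc (R : ℝ) (x : E) : cutoff R x ∈ Set.Icc 0 1 :=
  ⟨ContDiffBump.nonneg _, ContDiffBump.le_one _⟩

variable {R : ℝ}

theorem cutoff_eq_one (hR : 0 < R) {x : E} (hx : ‖x‖ ≤ R) : cutoff R x = 1 := by
  refine ContDiffBump.one_of_mem_closedBall _ (mem_closedBall_zero_iff.2 ?_)
  rw [norm_smul_of_nonneg (inv_nonneg.2 hR.le)]
  exact inv_mul_le_one_of_le₀ hx hR.le

theorem cutoff_eq_zero (hR : 0 < R) {x : E} (hx : 2 * R ≤ ‖x‖) : cutoff R x = 0 := by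
  refine ContDiffBump.zero_of_le_dist _ ?_
  rw [dist_zero_right, norm_smul_of_nonneg (inv_nonneg.2 hR.le), le_inv_mul_iff₀ hR, mul_comm]
  exact hx

theorem mem_closedBall_diff_of_fderiv_cutoff_ne_zero (hR : 0 < R) {x : E}
    (hx : fderiv ℝ (cutoff R) x ≠ 0) : x ∈ closedBall 0 (2 * R) \ closedBall (0 : E) R := by
  have hmem : cutoff R x ∈ Set.Ioo 0 1 :=
    not_imp_comm.1 (fderiv_eq_zero_of_notMem_Ioo (cutoff_mem_Icc R)) hx
  simp only [Set.mem_sdiff, mem_closedBall_zero_iff]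
  exact ⟨not_lt.1 fun h => hmem.1.ne' (cutoff_eq_zero hR h.le),
    fun h => hmem.2.ne (cutoff_eq_one hR h)⟩

theorem hasCompactSupport_cutoff [FiniteDimensional ℝ E] (hR : 0 < R) :
    HasCompactSupport (cutoff R : E → ℝ) :=
  (ContDiffBump.hasCompactSupport _).comp_smul (inv_ne_zero hR.ne')

end Cutoff

theorem integrable_sq_mul_of_hasCompactSupport {X : Type*} [TopologicalSpace X]
    [MeasurableSpace X] [OpensMeasurableSpace X] {μ : Measure X} [IsFiniteMeasureOnCompacts μ]
    {a η : X → ℝ} (ha : Continuous a) (hη : Continuous η) (hηc : HasCompactSupport η) :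
    Integrable (fun x => η x ^ 2 * a x) μ := by
  refine Continuous.integrable_of_hasCompactSupport (by fun_prop) ?_
  exact (hηc.comp_left (g := fun r => r ^ 2) (zero_pow two_ne_zero)).mul_right

theorem integrableOn_closedBall_of_continuous {X : Type*} [PseudoMetricSpace X] [ProperSpace X]
    [MeasurableSpace X] [OpensMeasurableSpace X] {μ : Measure X} [IsFiniteMeasureOnCompacts μ]
    {a : X → ℝ} (ha : Continuous a) (x : X) (R : ℝ) : IntegrableOn a (closedBall x R) μ :=
  ha.continuousOn.integrableOn_compact' (isCompact_closedBall x R) measurableSet_closedBall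

section Caccioppoli

variable {E : Type*} [NormedAddCommGroup E] [NormedSpace ℝ E] [MeasurableSpace E]
  {μ : Measure E} {a : E → ℝ} {c : ℝ}

/-- The Caccioppoli inequality for an energy density `a`. On the right the energy is only
counted where the test function `η` is not locally constant, which is what hole filling needs. -/
def SatisfiesCaccioppoli (a : E → ℝ) (c : ℝ) (μ : Measure E) : Prop :=
  ∀ η : E → ℝ, ContDiff ℝ 1 η → HasCompactSupport η →
    (∫ x, η x ^ 2 * a x ∂μ) ^ 2 ≤
      c * (∫ x in {x | fderiv ℝ η x ≠ 0}, η x ^ 2 * a x ∂μ) * ∫ x, ‖fderiv ℝ η x‖ ^ 2 ∂μ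

variable [BorelSpace E] [FiniteDimensional ℝ E] [IsFiniteMeasureOnCompacts μ]

theorem setIntegral_closedBall_le_integral_cutoff_sq_mul (ha : Continuous a) (ha0 : ∀ x, 0 ≤ a x)
    {R : ℝ} (hR : 0 < R) :
    ∫ x in closedBall 0 R, a x ∂μ ≤ ∫ x, cutoff R x ^ 2 * a x ∂μ := by
  rw [← integral_indicator measurableSet_closedBall]
  refine integral_mono ((integrableOn_closedBall_of_continuous ha 0 R).integrable_indicator
    measurableSet_closedBall) (integrable_sq_mul_of_hasCompactSupport ha
      (contDiff_cutoff R).continuous (hasCompactSupport_cutoff hR)) fun x => ?_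
  refine Set.indicator_apply_le' (fun hx => ?_) fun _ => mul_nonneg (sq_nonneg _) (ha0 x)
  rw [cutoff_eq_one hR (mem_closedBall_zero_iff.1 hx), one_pow, one_mul]

theorem setIntegral_fderiv_cutoff_ne_zero_le (ha : Continuous a) (ha0 : ∀ x, 0 ≤ a x)
    {R : ℝ} (hR : 0 < R) :
    ∫ x in {x | fderiv ℝ (cutoff R) x ≠ 0}, cutoff R x ^ 2 * a x ∂μ ≤
      (∫ x in closedBall 0 (2 * R), a x ∂μ) - ∫ x in closedBall 0 R, a x ∂μ := by
  have hsub : closedBall (0 : E) R ⊆ closedBall 0 (2 * R) :=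
    closedBall_subset_closedBall (by linarith)
  have hint := integrableOn_closedBall_of_continuous (μ := μ) ha 0 (2 * R)
  have hη := integrable_sq_mul_of_hasCompactSupport (μ := μ) ha (contDiff_cutoff R).continuous
    (hasCompactSupport_cutoff hR)
  rw [← setIntegral_sdiff measurableSet_closedBall hint hsub]
  calc ∫ x in {x | fderiv ℝ (cutoff R) x ≠ 0}, cutoff R x ^ 2 * a x ∂μ
      ≤ ∫ x in closedBall 0 (2 * R) \ closedBall 0 R, cutoff R x ^ 2 * a x ∂μ :=
        setIntegral_mono_set hη.integrableOn
          (.of_forall fun x => mul_nonneg (sq_nonneg _) (ha0 x))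
          (LE.le.eventuallyLE fun x =>
            mem_closedBall_diff_of_fderiv_cutoff_ne_zero hR)
    _ ≤ ∫ x in closedBall 0 (2 * R) \ closedBall 0 R, a x ∂μ :=
        integral_mono hη.integrableOn (hint.mono_set Set.sdiff_subset) fun x =>
          mul_le_of_le_one_left (ha0 x)
            (pow_le_one₀ (cutoff_mem_Icc R x).1 (cutoff_mem_Icc R x).2)

end Caccioppoli

section PlanarLiouville

variable {E : Type*} [NormedAddCommGroup E] [NormedSpace ℝ E] [MeasurableSpace E] [BorelSpace E]
  [FiniteDimensional ℝ E] {μ : Measure E} [μ.IsAddHaarMeasure] {a : E → ℝ} {c : ℝ}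

theorem SatisfiesCaccioppoli.exists_sq_setIntegral_closedBall_le
    (hdim : Module.finrank ℝ E = 2) (h : SatisfiesCaccioppoli a c μ) (hc : 0 ≤ c)
    (ha : Continuous a) (ha0 : ∀ x, 0 ≤ a x) :
    ∃ C, ∀ R, 0 < R → ∫ x in closedBall 0 R, a x ∂μ ≤ C ∧
      (∫ x in closedBall 0 R, a x ∂μ) ^ 2 ≤
        C * ((∫ x in closedBall 0 (2 * R), a x ∂μ) - ∫ x in closedBall 0 R, a x ∂μ) := by
  let b : ContDiffBump (0 : E) := ⟨1, 2, one_pos, one_lt_two⟩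
  have hJ : 0 ≤ ∫ x, ‖fderiv ℝ b x‖ ^ 2 ∂μ := integral_nonneg fun x => sq_nonneg _
  refine ⟨c * ∫ x, ‖fderiv ℝ b x‖ ^ 2 ∂μ, fun R hR => ?_⟩
  have hC : 0 ≤ c * ∫ x, ‖fderiv ℝ b x‖ ^ 2 ∂μ := mul_nonneg hc hJ
  have henergy : ∫ x, ‖fderiv ℝ (cutoff R) x‖ ^ 2 ∂μ = ∫ x, ‖fderiv ℝ b x‖ ^ 2 ∂μ :=
    hdim ▸ integral_norm_fderiv_comp_smul_pow_finrank μ b (inv_ne_zero hR.ne')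
  have hcacc := h (cutoff R) (contDiff_cutoff R) (hasCompactSupport_cutoff hR)
  rw [henergy, mul_right_comm] at hcacc
  have hball := setIntegral_closedBall_le_integral_cutoff_sq_mul (μ := μ) ha ha0 hR
  have hnonneg : ∀ x, 0 ≤ cutoff R x ^ 2 * a x := fun x => mul_nonneg (sq_nonneg _) (ha0 x)
  have hloc : ∫ x in {x | fderiv ℝ (cutoff R) x ≠ 0}, cutoff R x ^ 2 * a x ∂μ ≤
      ∫ x, cutoff R x ^ 2 * a x ∂μ :=
    setIntegral_le_integral (integrable_sq_mul_of_hasCompactSupport ha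
      (contDiff_cutoff R).continuous (hasCompactSupport_cutoff hR)) (.of_forall hnonneg)
  constructor
  · refine hball.trans ?_
    have hX : 0 ≤ ∫ x, cutoff R x ^ 2 * a x ∂μ := integral_nonneg hnonneg
    rcases hX.eq_or_lt with h0 | h0
    · exact h0 ▸ hC
    · refine le_of_mul_le_mul_right ?_ h0
      rw [← sq]
      exact hcacc.trans (mul_le_mul_of_nonneg_left hloc hC)
  · calc (∫ x in closedBall 0 R, a x ∂μ) ^ 2
        ≤ (∫ x, cutoff R x ^ 2 * a x ∂μ) ^ 2 :=
          pow_le_pow_left₀ (integral_nonneg ha0) hball 2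
      _ ≤ _ := hcacc.trans (mul_le_mul_of_nonneg_left
          (setIntegral_fderiv_cutoff_ne_zero_le ha ha0 hR) hC)

/-- Hole filling: by the Caccioppoli inequality the energy of a disc is controlled by that of the
surrounding annulus, which tends to `0` because the total energy is finite. -/
theorem SatisfiesCaccioppoli.eq_zero (hdim : Module.finrank ℝ E = 2)
    (h : SatisfiesCaccioppoli a c μ) (hc : 0 ≤ c) (ha : Continuous a) (ha0 : ∀ x, 0 ≤ a x)
    (x : E) : a x = 0 := by
  obtain ⟨C, hC⟩ := h.exists_sq_setIntegral_closedBall_le hdim hc ha ha0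
  have henergy : ∀ R, 0 < R → ∫ y in closedBall 0 R, a y ∂μ = 0 := by
    intro R hR
    let e : ℕ → ℝ := fun n => ∫ y in closedBall 0 (2 ^ n * R), a y ∂μ
    have hRn : ∀ n : ℕ, 0 < 2 ^ n * R := fun n => by positivity
    have hmono : Monotone e := fun m n hmn =>
      setIntegral_mono_set (integrableOn_closedBall_of_continuous ha 0 _) (.of_forall ha0)
        (closedBall_subset_closedBall
          (mul_le_mul_of_nonneg_right (pow_le_pow_right₀ one_le_two hmn) hR.le)).eventuallyLE
    have hbdd : BddAbove (Set.range e) := ⟨C, Set.forall_mem_range.2 fun n => (hC _ (hRn n)).1⟩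
    have hstep : ∀ n, e n ^ 2 ≤ C * (e (n + 1) - e n) := fun n => by
      have := (hC _ (hRn n)).2
      rwa [← mul_assoc, ← pow_succ'] at this
    have hle : e 0 ≤ 0 := nonpos_of_sq_le_mul_succ_sub hmono hbdd hstep 0
    simp only [e, pow_zero, one_mul] at hle
    exact le_antisymm hle (integral_nonneg ha0)
  have hR : 0 < ‖x‖ + 1 := by positivity
  have hae : a =ᵐ[μ.restrict (ball 0 (‖x‖ + 1))] 0 :=
    ae_restrict_of_ae_restrict_of_subset ball_subset_closedBall <|
      (setIntegral_eq_zero_iff_of_nonneg_ae (.of_forall ha0)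
        (integrableOn_closedBall_of_continuous ha 0 _)).1 (henergy _ hR)
  exact Measure.eqOn_open_of_ae_eq hae isOpen_ball ha.continuousOn continuousOn_const
    (mem_ball_zero_iff.2 (lt_add_one _))

end PlanarLiouville

section Gradient

variable {V : Type*} [NormedAddCommGroup V] [InnerProductSpace ℝ V] [CompleteSpace V]

theorem norm_gradient (u : V → ℝ) (x : V) : ‖gradient u x‖ = ‖fderiv ℝ u x‖ :=
  (InnerProductSpace.toDual ℝ V).symm.norm_map _

theorem abs_fderiv_apply_le_norm_mul_norm_gradient (u : V → ℝ) (x w : V) :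
    |fderiv ℝ u x w| ≤ ‖w‖ * ‖gradient u x‖ := by
  rw [norm_gradient, mul_comm]
  exact (fderiv ℝ u x).le_opNorm w

theorem contDiff_gradient {u : V → ℝ} {n : WithTop ℕ∞} (hu : ContDiff ℝ (n + 1) u) :
    ContDiff ℝ n (gradient u) :=
  (InnerProductSpace.toDual ℝ V).symm.contDiff.comp (hu.fderiv_right le_rfl)

theorem continuous_gradient {u : V → ℝ} (hu : ContDiff ℝ 1 u) : Continuous (gradient u) :=
  (InnerProductSpace.toDual ℝ V).symm.continuous.comp (hu.continuous_fderiv one_ne_zero)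

theorem gradient_sq_mul_comp {η v : V → ℝ} {Φ : ℝ → ℝ} {x : V} (hη : DifferentiableAt ℝ η x)
    (hv : DifferentiableAt ℝ v x) (hΦ : DifferentiableAt ℝ Φ (v x)) :
    gradient (fun y => η y ^ 2 * Φ (v y)) x =
      (2 * η x * Φ (v x)) • gradient η x + (η x ^ 2 * deriv Φ (v x)) • gradient v x := by
  have hderiv := (hη.hasFDerivAt.pow 2).fun_mul
    (hΦ.hasDerivAt.comp_hasFDerivAt x hv.hasFDerivAt)
  refine ext_inner_right ℝ fun w => ?_
  rw [inner_gradient_left]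
  refine (DFunLike.congr_fun hderiv.fderiv w).trans ?_
  simp only [inner_add_left, real_inner_smul_left, inner_gradient_left, add_apply, smul_apply,
    smul_eq_mul, nsmul_eq_mul, Function.comp_apply, pow_one, Nat.cast_ofNat, Nat.add_one_sub_one]
  ring

theorem continuous_deriv_mul_apply_gradient {A : V → V →L[ℝ] V →L[ℝ] ℝ} {v : V → ℝ} {Φ : ℝ → ℝ}
    (hA : Continuous A) (hv : ContDiff ℝ 1 v) (hΦ : ContDiff ℝ 1 Φ) :
    Continuous fun x => deriv Φ (v x) * A x (gradient v x) (gradient v x) :=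
  have hgrad : Continuous (gradient v) := continuous_gradient hv
  ((hΦ.continuous_deriv le_rfl).comp hv.continuous).mul ((hA.clm_apply hgrad).clm_apply hgrad)

theorem sq_mul_apply_gradient_le {B : V →L[ℝ] V →L[ℝ] ℝ} {v η : V → ℝ} {Φ : ℝ → ℝ} {C M : ℝ}
    {x : V} (hsymm : ∀ p q, B p q = B q p) (hB : ∀ p, 0 ≤ B p p) (hM : |Φ (v x)| ≤ M)
    (hC : ∀ p, B p p ≤ C * deriv Φ (v x) * ‖p‖ ^ 2) :
    (2 * η x * Φ (v x) * B (gradient v x) (gradient η x)) ^ 2 ≤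
      η x ^ 2 * (deriv Φ (v x) * B (gradient v x) (gradient v x)) *
        (4 * M ^ 2 * C * ‖fderiv ℝ η x‖ ^ 2) := by
  have hcauchy : B (gradient v x) (gradient η x) ^ 2 ≤
      B (gradient v x) (gradient v x) * B (gradient η x) (gradient η x) :=
    LinearMap.BilinForm.apply_sq_le_of_symm B.toLinearMap₁₂ hB ⟨hsymm⟩ _ _
  have hv := hB (gradient v x)
  have hΦ : Φ (v x) ^ 2 ≤ M ^ 2 := sq_le_sq' (abs_le.1 hM).1 (abs_le.1 hM).2
  rw [← norm_gradient]
  calc (2 * η x * Φ (v x) * B (gradient v x) (gradient η x)) ^ 2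
      = 4 * η x ^ 2 * (Φ (v x) ^ 2 * B (gradient v x) (gradient η x) ^ 2) := by ring
    _ ≤ 4 * η x ^ 2 * (M ^ 2 * (B (gradient v x) (gradient v x) *
          (C * deriv Φ (v x) * ‖gradient η x‖ ^ 2))) := by
        gcongr
        exact hcauchy.trans (mul_le_mul_of_nonneg_left (hC _) hv)
    _ = _ := by ring

end Gradient

section WeakSolution

variable {V : Type*} [NormedAddCommGroup V] [InnerProductSpace ℝ V] [CompleteSpace V]
  [MeasurableSpace V]

/-- `v` is a weak solution of the linear equation `div (A ∇v) = 0`, where the coefficient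
matrices `A x` are encoded as bilinear forms. -/
def IsWeakSolution (A : V → V →L[ℝ] V →L[ℝ] ℝ) (v : V → ℝ) (μ : Measure V) : Prop :=
  ∀ φ : V → ℝ, ContDiff ℝ 1 φ → HasCompactSupport φ →
    ∫ x, A x (gradient v x) (gradient φ x) ∂μ = 0

variable [BorelSpace V] {A : V → V →L[ℝ] V →L[ℝ] ℝ} {v : V → ℝ} {μ : Measure V}
  [IsFiniteMeasureOnCompacts μ] {Φ : ℝ → ℝ} {C M : ℝ}

/-- Testing the equation with `η² Φ(v)`. -/
theorem IsWeakSolution.integral_sq_mul_eq (h : IsWeakSolution A v μ) (hAcont : Continuous A)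
    (hv : ContDiff ℝ 1 v) (hΦ : ContDiff ℝ 1 Φ) {η : V → ℝ} (hη : ContDiff ℝ 1 η)
    (hηc : HasCompactSupport η) :
    ∫ x, η x ^ 2 * (deriv Φ (v x) * A x (gradient v x) (gradient v x)) ∂μ =
      -∫ x, 2 * η x * Φ (v x) * A x (gradient v x) (gradient η x) ∂μ := by
  have hflux : Continuous fun x => A x (gradient v x) (gradient η x) :=
    (hAcont.clm_apply (continuous_gradient hv)).clm_apply (continuous_gradient hη)
  have hfst : Integrable (fun x => 2 * η x * Φ (v x) * A x (gradient v x) (gradient η x)) μ :=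
    Continuous.integrable_of_hasCompactSupport
      (((hη.continuous.const_mul 2).mul (hΦ.continuous.comp hv.continuous)).mul hflux)
      hηc.mul_left.mul_right.mul_right
  have hsnd : Integrable
      (fun x => η x ^ 2 * (deriv Φ (v x) * A x (gradient v x) (gradient v x))) μ :=
    integrable_sq_mul_of_hasCompactSupport (continuous_deriv_mul_apply_gradient hAcont hv hΦ)
      hη.continuous hηc
  have htest := h (fun x => η x ^ 2 * Φ (v x)) ((hη.pow 2).mul (hΦ.comp hv))
    (hηc.comp_left (g := fun r => r ^ 2) (zero_pow two_ne_zero)).mul_right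
  have hpt : ∀ x, A x (gradient v x) (gradient (fun y => η y ^ 2 * Φ (v y)) x) =
      2 * η x * Φ (v x) * A x (gradient v x) (gradient η x) +
        η x ^ 2 * (deriv Φ (v x) * A x (gradient v x) (gradient v x)) := fun x => by
    rw [gradient_sq_mul_comp (hη.differentiable one_ne_zero x) (hv.differentiable one_ne_zero x)
      (hΦ.differentiable one_ne_zero _), map_add, map_smul, map_smul, smul_eq_mul, smul_eq_mul,
      mul_assoc (η x ^ 2)]
  simp_rw [hpt] at htest
  rw [integral_add hfst hsnd] at htest
  linarith

theorem IsWeakSolution.satisfiesCaccioppoli (h : IsWeakSolution A v μ) (hAcont : Continuous A)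
    (hsymm : ∀ x p q, A x p q = A x q p) (hA : ∀ x p, 0 ≤ A x p p) (hv : ContDiff ℝ 1 v)
    (hΦ : ContDiff ℝ 1 Φ) (hΦ' : ∀ s, 0 ≤ deriv Φ s) (hM : ∀ s, |Φ s| ≤ M) (hC0 : 0 ≤ C)
    (hC : ∀ x p, A x p p ≤ C * deriv Φ (v x) * ‖p‖ ^ 2) :
    SatisfiesCaccioppoli (fun x => deriv Φ (v x) * A x (gradient v x) (gradient v x))
      (4 * M ^ 2 * C) μ := by
  intro η hη hηc
  have hη' : Continuous (fderiv ℝ η) := hη.continuous_fderiv one_ne_zero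
  have hS : MeasurableSet {x | fderiv ℝ η x ≠ 0} :=
    (isOpen_ne_fun hη' continuous_const).measurableSet
  have henergy : Integrable
      (fun x => η x ^ 2 * (deriv Φ (v x) * A x (gradient v x) (gradient v x))) μ :=
    integrable_sq_mul_of_hasCompactSupport (continuous_deriv_mul_apply_gradient hAcont hv hΦ)
      hη.continuous hηc
  have hdirichlet : Integrable (fun x => ‖fderiv ℝ η x‖ ^ 2) μ := by
    refine Continuous.integrable_of_hasCompactSupport (hη'.norm.pow 2) ?_
    exact (hηc.fderiv ℝ).comp_left (g := fun L => ‖L‖ ^ 2) (by simp)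
  suffices hCS : (∫ x, 2 * η x * Φ (v x) * A x (gradient v x) (gradient η x) ∂μ) ^ 2 ≤
      (∫ x in {x | fderiv ℝ η x ≠ 0},
        η x ^ 2 * (deriv Φ (v x) * A x (gradient v x) (gradient v x)) ∂μ) *
        ∫ x, 4 * M ^ 2 * C * ‖fderiv ℝ η x‖ ^ 2 ∂μ by
    rw [h.integral_sq_mul_eq hAcont hv hΦ hη hηc, neg_sq]
    rw [integral_const_mul] at hCS
    linarith
  rw [← integral_indicator hS]
  refine sq_integral_le_integral_mul_integral (henergy.indicator hS)
    (hdirichlet.const_mul _) (fun x => ?_) (fun x => by positivity) fun x => ?_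
  · exact Set.indicator_nonneg
      (fun x _ => mul_nonneg (sq_nonneg _) (mul_nonneg (hΦ' _) (hA _ _))) x
  · by_cases hx : fderiv ℝ η x = 0
    · simp [gradient, hx]
    · rw [Set.indicator_of_mem (s := {x | fderiv ℝ η x ≠ 0}) hx]
      exact sq_mul_apply_gradient_le (hsymm x) (hA x) (hM _) (hC x)

end WeakSolution

theorem IsWeakSolution.gradient_eq_zero {V : Type*} [NormedAddCommGroup V]
    [InnerProductSpace ℝ V] [FiniteDimensional ℝ V] [MeasurableSpace V] [BorelSpace V]
    {μ : Measure V} [μ.IsAddHaarMeasure] {A : V → V →L[ℝ] V →L[ℝ] ℝ} {v : V → ℝ}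
    {Φ : ℝ → ℝ} {C M : ℝ} (hdim : Module.finrank ℝ V = 2) (h : IsWeakSolution A v μ)
    (hAcont : Continuous A) (hsymm : ∀ x p q, A x p q = A x q p)
    (hA : ∀ x p, p ≠ 0 → 0 < A x p p) (hv : ContDiff ℝ 1 v) (hΦ : ContDiff ℝ 1 Φ)
    (hΦ' : ∀ s, 0 < deriv Φ s) (hM : ∀ s, |Φ s| ≤ M) (hC0 : 0 ≤ C)
    (hC : ∀ x p, A x p p ≤ C * deriv Φ (v x) * ‖p‖ ^ 2) (x : V) : gradient v x = 0 := by
  have hA0 : ∀ x p, 0 ≤ A x p p := fun x p => by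
    rcases eq_or_ne p 0 with rfl | hp
    · simp
    · exact (hA x p hp).le
  have hcacc := h.satisfiesCaccioppoli hAcont hsymm hA0 hv hΦ (fun s => (hΦ' s).le) hM hC0 hC
  have henergy : deriv Φ (v x) * A x (gradient v x) (gradient v x) = 0 :=
    hcacc.eq_zero hdim (by positivity) (continuous_deriv_mul_apply_gradient hAcont hv hΦ)
      (fun x => mul_nonneg (hΦ' _).le (hA0 _ _)) x
  by_contra hne
  exact (mul_pos (hΦ' (v x)) (hA x _ hne)).ne' henergy

section DivergenceFree

variable {E : Type*} [NormedAddCommGroup E] [NormedSpace ℝ E] [MeasurableSpace E] [BorelSpace E]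
  {μ : Measure E}

theorem hasDerivAt_integral_comp_add_smul_mul [IsFiniteMeasureOnCompacts μ] {g ψ : E → ℝ}
    (hg : ContDiff ℝ 1 g) (hψ : Continuous ψ) (hψc : HasCompactSupport ψ) (w : E) :
    HasDerivAt (fun t : ℝ => ∫ x, g (x + t • w) * ψ x ∂μ) (∫ x, fderiv ℝ g x w * ψ x ∂μ) 0 := by
  have hg' : Continuous fun q : ℝ × E => fderiv ℝ g (q.2 + q.1 • w) w :=
    ((hg.continuous_fderiv one_ne_zero).comp (by fun_prop)).clm_apply continuous_const
  have hcont : ∀ t : ℝ, Continuous fun x => g (x + t • w) * ψ x := fun t =>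
    (hg.continuous.comp (by fun_prop)).mul hψ
  obtain ⟨M, hM⟩ := (isCompact_Icc (a := (-1 : ℝ)) (b := 1)).prod hψc
    |>.exists_bound_of_continuousOn hg'.continuousOn
  have hderiv : ∀ x t, HasDerivAt (fun t : ℝ => g (x + t • w) * ψ x)
      (fderiv ℝ g (x + t • w) w * ψ x) t := fun x t => by
    have hline : HasDerivAt (fun t : ℝ => x + t • w) w t := by
      simpa using ((hasDerivAt_id t).smul_const w).const_add x
    exact ((hg.differentiable one_ne_zero _).hasFDerivAt.comp_hasDerivAt t hline).mul_const _
  have hbound : ∀ x, ∀ t ∈ Set.Icc (-1 : ℝ) 1,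
      ‖fderiv ℝ g (x + t • w) w * ψ x‖ ≤ M * ‖ψ x‖ := fun x t ht => by
    rw [norm_mul]
    by_cases hx : x ∈ tsupport ψ
    · exact mul_le_mul_of_nonneg_right (hM (t, x) ⟨ht, hx⟩) (norm_nonneg _)
    · simp [image_eq_zero_of_notMem_tsupport hx]
  simpa using (hasDerivAt_integral_of_dominated_loc_of_deriv_le (x₀ := (0 : ℝ))
    (Icc_mem_nhds (by norm_num) (by norm_num))
    (.of_forall fun t => (hcont t).aestronglyMeasurable)
    ((hcont 0).integrable_of_hasCompactSupport hψc.mul_left)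
    ((hg'.comp (by fun_prop : Continuous fun x : E => ((0 : ℝ), x))).mul
      hψ).aestronglyMeasurable
    (.of_forall hbound)
    ((hψ.norm.const_mul M).integrable_of_hasCompactSupport hψc.norm.mul_left)
    (.of_forall fun x t _ => hderiv x t)).2

variable [FiniteDimensional ℝ E] [μ.IsAddHaarMeasure] {ι : Type*} [Fintype ι] {e : ι → E}
  {X : ι → E → ℝ} {φ : E → ℝ}

theorem sum_integral_mul_fderiv_eq_zero (hX : ∀ i, ContDiff ℝ 1 (X i))
    (hdiv : ∀ x, ∑ i, fderiv ℝ (X i) x (e i) = 0) (hφ : ContDiff ℝ 1 φ)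
    (hφc : HasCompactSupport φ) : ∑ i, ∫ x, X i x * fderiv ℝ φ x (e i) ∂μ = 0 := by
  have hX' : ∀ i, Continuous fun x => fderiv ℝ (X i) x (e i) := fun i =>
    ((hX i).continuous_fderiv one_ne_zero).clm_apply continuous_const
  have hφ' : ∀ i, Continuous fun x => fderiv ℝ φ x (e i) := fun i =>
    (hφ.continuous_fderiv one_ne_zero).clm_apply continuous_const
  have hint : ∀ i, Integrable (fun x => fderiv ℝ (X i) x (e i) * φ x) μ := fun i =>
    ((hX' i).mul hφ.continuous).integrable_of_hasCompactSupport hφc.mul_left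
  have hparts : ∀ i, ∫ x, X i x * fderiv ℝ φ x (e i) ∂μ =
      -∫ x, fderiv ℝ (X i) x (e i) * φ x ∂μ := fun i =>
    integral_mul_fderiv_eq_neg_fderiv_mul_of_integrable (hint i)
      (((hX i).continuous.mul (hφ' i)).integrable_of_hasCompactSupport
        (hφc.fderiv_apply ℝ (e i)).mul_left)
      (((hX i).continuous.mul hφ.continuous).integrable_of_hasCompactSupport hφc.mul_left)
      (fun x _ => (hX i).differentiable one_ne_zero x)
      (fun x _ => hφ.differentiable one_ne_zero x)
  simp_rw [hparts, Finset.sum_neg_distrib]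
  rw [← integral_finsetSum _ fun i _ => hint i]
  simp_rw [← Finset.sum_mul, hdiv, zero_mul, integral_zero, neg_zero]

/-- The derivative of a divergence-free field is only continuous: it is divergence-free in the
weak sense because it is the limit of difference quotients of translates of the field. -/
theorem sum_integral_fderiv_mul_fderiv_eq_zero (hX : ∀ i, ContDiff ℝ 1 (X i))
    (hdiv : ∀ x, ∑ i, fderiv ℝ (X i) x (e i) = 0) (hφ : ContDiff ℝ 1 φ)
    (hφc : HasCompactSupport φ) (w : E) :
    ∑ i, ∫ x, fderiv ℝ (X i) x w * fderiv ℝ φ x (e i) ∂μ = 0 := by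
  have hderiv : HasDerivAt (fun t : ℝ => ∑ i, ∫ x, X i (x + t • w) * fderiv ℝ φ x (e i) ∂μ)
      (∑ i, ∫ x, fderiv ℝ (X i) x w * fderiv ℝ φ x (e i) ∂μ) 0 :=
    HasDerivAt.fun_sum fun i _ => hasDerivAt_integral_comp_add_smul_mul (hX i)
      ((hφ.continuous_fderiv one_ne_zero).clm_apply continuous_const)
      (hφc.fderiv_apply ℝ (e i)) w
  have htranslate : ∀ t : ℝ, ∑ i, ∫ x, X i (x + t • w) * fderiv ℝ φ x (e i) ∂μ = 0 := fun t =>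
    sum_integral_mul_fderiv_eq_zero (X := fun i x => X i (x + t • w))
      (fun i => (hX i).comp (by fun_prop))
      (fun x => by simpa only [fderiv_comp_add_right] using hdiv (x + t • w)) hφ hφc
  simp_rw [htranslate] at hderiv
  exact hderiv.unique (hasDerivAt_const _ _)

end DivergenceFree

theorem sum_apply_mul_inner_eq_apply {V ι : Type*} [NormedAddCommGroup V]
    [InnerProductSpace ℝ V] [Fintype ι] (b : OrthonormalBasis ι ℝ V) (L : V →L[ℝ] ℝ) (p : V) :
    ∑ i, L (b i) * inner ℝ p (b i) = L p := by
  conv_rhs => rw [← b.sum_repr' p]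
  simp [map_sum, mul_comm, real_inner_comm]

section EulerLagrange

variable {V : Type*} [NormedAddCommGroup V] [InnerProductSpace ℝ V] [CompleteSpace V]
  {f u : V → ℝ}

theorem inner_fderiv_gradient_apply (hu : ContDiff ℝ 2 u) (x w z : V) :
    inner ℝ (fderiv ℝ (gradient u) x w) z = fderiv ℝ (fderiv ℝ u) x w z := by
  have hfderiv : fderiv ℝ u = fun y => innerSL ℝ (gradient u y) :=
    funext fun y => ContinuousLinearMap.ext fun z => (inner_gradient_left).symm
  have hgrad : DifferentiableAt ℝ (gradient u) x :=
    (contDiff_gradient (n := 1) hu).differentiable one_ne_zero x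
  conv_rhs => rw [hfderiv]
  exact (DFunLike.congr_fun (DFunLike.congr_fun
    ((innerSL ℝ).hasFDerivAt.comp x hgrad.hasFDerivAt).fderiv w) z).symm

theorem isSymmetric_fderiv_gradient (hu : ContDiff ℝ 2 u) (x : V) :
    (fderiv ℝ (gradient u) x : V →ₗ[ℝ] V).IsSymmetric := fun w z => by
  rw [real_inner_comm _ w]
  simp only [ContinuousLinearMap.coe_coe, inner_fderiv_gradient_apply hu]
  exact hu.contDiffAt.isSymmSndFDerivAt (by simp) w z

theorem gradient_fderiv_apply (hu : ContDiff ℝ 2 u) (x w : V) :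
    gradient (fun y => fderiv ℝ u y w) x = fderiv ℝ (gradient u) x w := by
  have hderiv : DifferentiableAt ℝ (fderiv ℝ u) x :=
    (hu.fderiv_right (m := 1) le_rfl).differentiable one_ne_zero x
  refine ext_inner_right ℝ fun z => ?_
  rw [inner_gradient_left, inner_fderiv_gradient_apply hu, fderiv_clm_apply hderiv (by fun_prop)]
  simpa using hu.contDiffAt.isSymmSndFDerivAt (by simp) z w

theorem contDiff_fderiv_gradient_apply (hf : ContDiff ℝ 2 f) (hu : ContDiff ℝ 2 u) (e : V) :
    ContDiff ℝ 1 fun y => fderiv ℝ f (gradient u y) e :=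
  ((hf.fderiv_right (m := 1) le_rfl).comp (contDiff_gradient hu)).clm_apply contDiff_const

theorem fderiv_fderiv_gradient_apply (hf : ContDiff ℝ 2 f) (hu : ContDiff ℝ 2 u) (x w e : V) :
    fderiv ℝ (fun y => fderiv ℝ f (gradient u y) e) x w =
      fderiv ℝ (fderiv ℝ f) (gradient u x) (fderiv ℝ (gradient u) x w) e := by
  have hf' : DifferentiableAt ℝ (fderiv ℝ f) (gradient u x) :=
    (hf.fderiv_right (m := 1) le_rfl).differentiable one_ne_zero _
  have hgrad : DifferentiableAt ℝ (gradient u) x :=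
    (contDiff_gradient (n := 1) hu).differentiable one_ne_zero x
  have hcomp := hf'.hasFDerivAt.comp x hgrad.hasFDerivAt
  exact DFunLike.congr_fun
    (((ContinuousLinearMap.apply ℝ ℝ e).hasFDerivAt.comp x hcomp).fderiv) w

variable [FiniteDimensional ℝ V] [MeasurableSpace V] [BorelSpace V] {μ : Measure V}
  [μ.IsAddHaarMeasure] {ι : Type*} [Fintype ι]

theorem isWeakSolution_fderiv_apply (hf : ContDiff ℝ 2 f) (hu : ContDiff ℝ 2 u)
    (b : OrthonormalBasis ι ℝ V)
    (heq : ∀ x, ∑ i, fderiv ℝ (fun y => fderiv ℝ f (gradient u y) (b i)) x (b i) = 0) (w : V) :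
    IsWeakSolution (fun x => fderiv ℝ (fderiv ℝ f) (gradient u x)) (fun x => fderiv ℝ u x w) μ := by
  intro φ hφ hφc
  have hsum := sum_integral_fderiv_mul_fderiv_eq_zero (μ := μ)
    (fun i => contDiff_fderiv_gradient_apply hf hu (b i)) heq hφ hφc w
  have hint : ∀ i, Integrable (fun x =>
      fderiv ℝ (fun y => fderiv ℝ f (gradient u y) (b i)) x w * fderiv ℝ φ x (b i)) μ := fun i =>
    ((((contDiff_fderiv_gradient_apply hf hu (b i)).continuous_fderiv one_ne_zero).clm_apply
      continuous_const).mul ((hφ.continuous_fderiv one_ne_zero).clm_apply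
        continuous_const)).integrable_of_hasCompactSupport (hφc.fderiv_apply ℝ (b i)).mul_left
  rw [← integral_finsetSum _ fun i _ => hint i] at hsum
  rw [← hsum]
  refine integral_congr_ae (.of_forall fun x => ?_)
  simp_rw [fderiv_fderiv_gradient_apply hf hu, gradient_fderiv_apply hu,
    ← inner_gradient_left (f := φ)]
  exact (sum_apply_mul_inner_eq_apply b _ _).symm

end EulerLagrange

theorem exists_apply_eq_inner_smul_of_isSymmetric {V : Type*} [NormedAddCommGroup V]
    [InnerProductSpace ℝ V] (hdim : Module.finrank ℝ V = 2) {T : V →ₗ[ℝ] V}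
    (hT : T.IsSymmetric) {e : V} (he : e ≠ 0) (hTe : T e = 0) :
    ∃ n ≠ 0, ∃ c : ℝ, ∀ w, T w = (c * inner ℝ n w) • n := by
  have : Fact (Module.finrank ℝ V = 1 + 1) := ⟨hdim⟩
  obtain ⟨⟨n, hn⟩, hn0, hspan⟩ :=
    finrank_eq_one_iff'.1 (Submodule.finrank_orthogonal_span_singleton (𝕜 := ℝ) he)
  have hrange : ∀ w, ∃ d : ℝ, d • n = T w := fun w => by
    have hw : T w ∈ (ℝ ∙ e)ᗮ := by
      rw [Submodule.mem_orthogonal_singleton_iff_inner_right, ← hT, hTe, inner_zero_left]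
    obtain ⟨d, hd⟩ := hspan ⟨T w, hw⟩
    exact ⟨d, congrArg Subtype.val hd⟩
  have hn' : n ≠ 0 := fun h => hn0 (Subtype.ext h)
  obtain ⟨d, hd⟩ := hrange n
  refine ⟨n, hn', d / inner ℝ n n, fun w => ?_⟩
  obtain ⟨k, hk⟩ := hrange w
  have hdk : d * inner ℝ n w = k * inner ℝ n n := by
    simpa only [← hd, ← hk, inner_smul_left, inner_smul_right, conj_trivial] using hT n w
  rw [← hk, div_mul_eq_mul_div, hdk, mul_div_cancel_right₀ _ (inner_self_ne_zero.2 hn')]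

theorem eq_zero_of_isSymmetric_of_sum_apply_eq_zero {V ι : Type*} [NormedAddCommGroup V]
    [InnerProductSpace ℝ V] [Fintype ι] (hdim : Module.finrank ℝ V = 2)
    (b : OrthonormalBasis ι ℝ V) {T : V →ₗ[ℝ] V} (hT : T.IsSymmetric) {e : V} (he : e ≠ 0)
    (hTe : T e = 0) {B : V →L[ℝ] V →L[ℝ] ℝ} (hB : ∀ q, q ≠ 0 → 0 < B q q)
    (hsum : ∑ i, B (T (b i)) (b i) = 0) : T = 0 := by
  obtain ⟨n, hn, c, hTn⟩ := exists_apply_eq_inner_smul_of_isSymmetric hdim hT he hTe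
  have hc : c * B n n = 0 :=
    calc c * B n n = ∑ i, c * (B n (b i) * inner ℝ n (b i)) := by
          rw [← Finset.mul_sum, sum_apply_mul_inner_eq_apply]
      _ = ∑ i, B (T (b i)) (b i) := Finset.sum_congr rfl fun i _ => by
          rw [hTn, map_smul, smul_apply, smul_eq_mul]
          ring
      _ = 0 := hsum
  ext w
  simp [hTn, (mul_eq_zero.1 hc).resolve_right (hB n hn).ne']

theorem fderiv_gradient_eq_zero_of_norm_fderiv_fderiv_le {V ι : Type*} [NormedAddCommGroup V]
    [InnerProductSpace ℝ V] [FiniteDimensional ℝ V] [Fintype ι] {f u : V → ℝ} {Φ : ℝ → ℝ}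
    {C M : ℝ} (hdim : Module.finrank ℝ V = 2)
    (b : OrthonormalBasis ι ℝ V) (hf : ContDiff ℝ 2 f)
    (hpos : ∀ p q, q ≠ 0 → 0 < fderiv ℝ (fderiv ℝ f) p q q) (hu : ContDiff ℝ 2 u)
    (heq : ∀ x, ∑ i, fderiv ℝ (fun y => fderiv ℝ f (gradient u y) (b i)) x (b i) = 0)
    {e : V} (he : e ≠ 0) (hΦ : ContDiff ℝ 1 Φ) (hΦ' : ∀ s, 0 < deriv Φ s)
    (hM : ∀ s, |Φ s| ≤ M)
    (hC : ∀ x, ‖fderiv ℝ (fderiv ℝ f) (gradient u x)‖ ≤ C * deriv Φ (fderiv ℝ u x e)) (x : V) :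
    fderiv ℝ (gradient u) x = 0 := by
  let : MeasurableSpace V := borel V
  have : BorelSpace V := ⟨rfl⟩
  have hC0 : 0 ≤ C := nonneg_of_mul_nonneg_left ((hC 0).trans' (by positivity)) (hΦ' _)
  have hA : Continuous fun x => fderiv ℝ (fderiv ℝ f) (gradient u x) :=
    ((hf.fderiv_right (m := 1) le_rfl).continuous_fderiv one_ne_zero).comp
      (contDiff_gradient (n := 1) hu).continuous
  have hbound : ∀ x p, fderiv ℝ (fderiv ℝ f) (gradient u x) p p ≤
      C * deriv Φ (fderiv ℝ u x e) * ‖p‖ ^ 2 := fun x p =>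
    calc fderiv ℝ (fderiv ℝ f) (gradient u x) p p
        ≤ ‖fderiv ℝ (fderiv ℝ f) (gradient u x)‖ * ‖p‖ * ‖p‖ :=
          (Real.le_norm_self _).trans (ContinuousLinearMap.le_opNorm₂ _ p p)
      _ = ‖fderiv ℝ (fderiv ℝ f) (gradient u x)‖ * ‖p‖ ^ 2 := by ring
      _ ≤ C * deriv Φ (fderiv ℝ u x e) * ‖p‖ ^ 2 := by gcongr; exact hC x
  have hTe : fderiv ℝ (gradient u) x e = 0 := by
    rw [← gradient_fderiv_apply hu]
    exact (isWeakSolution_fderiv_apply (μ := volume) hf hu b heq e).gradient_eq_zero hdim hA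
      (fun x p q => hf.contDiffAt.isSymmSndFDerivAt (by simp) p q) (fun x => hpos _)
      ((hu.fderiv_right le_rfl).clm_apply contDiff_const) hΦ hΦ' hM hC0 hbound x
  have hzero := eq_zero_of_isSymmetric_of_sum_apply_eq_zero hdim b
    (isSymmetric_fderiv_gradient hu x) he hTe (hpos (gradient u x))
    (by simpa only [ContinuousLinearMap.coe_coe, fderiv_fderiv_gradient_apply hf hu] using heq x)
  exact ContinuousLinearMap.coe_injective hzero

theorem eq_inner_gradient_add_of_fderiv_gradient_eq_zero {V : Type*} [NormedAddCommGroup V]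
    [InnerProductSpace ℝ V] [CompleteSpace V] {u : V → ℝ} (hu : ContDiff ℝ 2 u)
    (h : ∀ x, fderiv ℝ (gradient u) x = 0) (x : V) : u x = inner ℝ (gradient u 0) x + u 0 := by
  have hconst : ∀ y, gradient u y = gradient u 0 := fun y =>
    is_const_of_fderiv_eq_zero ((contDiff_gradient (n := 1) hu).differentiable one_ne_zero) h y 0
  have hfderiv : ∀ y, fderiv ℝ u y = innerSL ℝ (gradient u 0) := fun y =>
    ContinuousLinearMap.ext fun z => by rw [← inner_gradient_left, hconst y, innerSL_apply_apply]
  have hderiv : ∀ y, HasFDerivAt (fun y => u y - innerSL ℝ (gradient u 0) y) 0 y := fun y => by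
    simpa only [hfderiv, sub_self] using
      (hu.differentiable two_ne_zero y).hasFDerivAt.fun_sub
        (innerSL ℝ (gradient u 0)).hasFDerivAt
  have hsub := is_const_of_fderiv_eq_zero (fun y => (hderiv y).differentiableAt)
    (fun y => (hderiv y).fderiv) x 0
  simpa only [innerSL_apply_apply, inner_zero_right, sub_zero, sub_eq_iff_eq_add'] using hsub

section Weight

theorem contDiff_arctan_arsinh : ContDiff ℝ 1 fun s => arctan (arsinh s) :=
  contDiff_arctan.comp contDiff_arsinh

theorem abs_arctan_arsinh_le (s : ℝ) : |arctan (arsinh s)| ≤ π / 2 :=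
  abs_le.2 ⟨(neg_pi_div_two_lt_arctan _).le, (arctan_lt_pi_div_two _).le⟩

/-- This decays like `1 / (|s| * log |s| ^ 2)`, which is integrable at infinity: the exponent `2` of
the logarithm in the growth condition is what allows a bounded primitive. -/
theorem deriv_arctan_arsinh (s : ℝ) :
    deriv (fun s => arctan (arsinh s)) s = ((1 + arsinh s ^ 2) * √(1 + s ^ 2))⁻¹ := by
  rw [(hasDerivAt_arsinh s).arctan.deriv, mul_inv, one_div]

theorem deriv_arctan_arsinh_pos (s : ℝ) : 0 < deriv (fun s => arctan (arsinh s)) s := by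
  rw [deriv_arctan_arsinh]
  positivity

theorem abs_arsinh (s : ℝ) : |arsinh s| = arsinh |s| := by
  rcases le_total 0 s with h | h
  · rw [abs_of_nonneg h, abs_of_nonneg (arsinh_nonneg_iff.2 h)]
  · rw [abs_of_nonpos h, abs_of_nonpos (arsinh_nonpos_iff.2 h), arsinh_neg]

theorem abs_arsinh_le_one_add_log (s : ℝ) : |arsinh s| ≤ 1 + log (1 + |s|) := by
  have hsqrt : √(1 + |s| ^ 2) ≤ 1 + |s| := by simpa using sqrt_one_add_norm_sq_le s
  calc |arsinh s| = log (|s| + √(1 + |s| ^ 2)) := abs_arsinh s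
    _ ≤ log (2 * (1 + |s|)) := log_le_log (by positivity) (by linarith)
    _ = log 2 + log (1 + |s|) := log_mul two_ne_zero (by positivity)
    _ ≤ 1 + log (1 + |s|) := by linarith [log_two_lt_d9]

theorem log_one_add_sq_le {r : ℝ} (hr : 0 ≤ r) :
    log (1 + r) ^ 2 ≤ 1 + r * log (1 + r) ^ 2 := by
  rcases le_total r 1 with h | h
  · have hlog : log (1 + r) ≤ r := by linarith [log_le_sub_one_of_pos (show 0 < 1 + r by linarith)]
    have hlog1 : log (1 + r) ^ 2 ≤ 1 :=
      pow_le_one₀ (log_nonneg (by linarith)) (hlog.trans h)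
    linarith [mul_nonneg hr (sq_nonneg (log (1 + r)))]
  · linarith [le_mul_of_one_le_left (sq_nonneg (log (1 + r))) h]

theorem le_three_add_mul_log_one_add_sq {r : ℝ} (hr : 0 ≤ r) :
    r ≤ 3 + r * log (1 + r) ^ 2 := by
  rcases le_total r 3 with h | h
  · linarith [mul_nonneg hr (sq_nonneg (log (1 + r)))]
  · have hlog : 1 ≤ log (1 + r) := by
      rw [le_log_iff_exp_le (by linarith)]
      linarith [exp_one_lt_d9]
    linarith [le_mul_of_one_le_right hr (one_le_pow₀ hlog (n := 2))]

theorem one_add_arsinh_sq_mul_sqrt_le (s : ℝ) :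
    (1 + arsinh s ^ 2) * √(1 + s ^ 2) ≤ 14 * (1 + |s| * log (1 + |s|) ^ 2) := by
  have hr : 0 ≤ |s| := abs_nonneg s
  have hsqrt : √(1 + s ^ 2) ≤ 1 + |s| := by simpa using sqrt_one_add_norm_sq_le s
  have hsq : arsinh s ^ 2 ≤ (1 + log (1 + |s|)) ^ 2 :=
    sq_abs (arsinh s) ▸ pow_le_pow_left₀ (abs_nonneg _) (abs_arsinh_le_one_add_log s) 2
  calc (1 + arsinh s ^ 2) * √(1 + s ^ 2)
      ≤ (3 + 2 * log (1 + |s|) ^ 2) * (1 + |s|) :=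
        mul_le_mul (by linarith [two_mul_le_add_sq 1 (log (1 + |s|))]) hsqrt (by positivity)
          (by positivity)
    _ ≤ 14 * (1 + |s| * log (1 + |s|) ^ 2) := by
        linarith [log_one_add_sq_le hr, le_three_add_mul_log_one_add_sq hr,
          mul_nonneg hr (sq_nonneg (log (1 + |s|)))]

theorem inv_le_mul_deriv_arctan_arsinh {K s t : ℝ} (ht : 1 ≤ t)
    (h : |s| * log (1 + |s|) ^ 2 ≤ K * t) :
    t⁻¹ ≤ 14 * (1 + K) * deriv (fun s => arctan (arsinh s)) s := by
  rw [deriv_arctan_arsinh, ← div_eq_mul_inv, inv_eq_one_div,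
    div_le_div_iff₀ (by positivity) (by positivity), one_mul]
  linarith [one_add_arsinh_sq_mul_sqrt_le s]

theorem inv_one_add_norm_gradient_le_mul_deriv_arctan_arsinh {V : Type*} [NormedAddCommGroup V]
    [InnerProductSpace ℝ V] [CompleteSpace V] {u : V → ℝ} {x E₁ E₂ : V} {K : ℝ} (hK : 0 ≤ K)
    (h : |fderiv ℝ u x E₁| * log (1 + |fderiv ℝ u x E₁|) ^ 2 ≤ K * (|fderiv ℝ u x E₂| + 1)) :
    (1 + ‖gradient u x‖)⁻¹ ≤ 14 * (1 + K * (1 + ‖E₂‖)) *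
      deriv (fun s => arctan (arsinh s)) (fderiv ℝ u x E₁) := by
  refine inv_le_mul_deriv_arctan_arsinh (le_add_of_nonneg_right (norm_nonneg _)) (h.trans ?_)
  rw [mul_assoc]
  gcongr
  linarith [abs_fderiv_apply_le_norm_mul_norm_gradient u x E₂, norm_nonneg E₂,
    norm_nonneg (gradient u x)]

end Weight

theorem norm_iteratedFDeriv_two {E F : Type*} [NormedAddCommGroup E] [NormedSpace ℝ E]
    [NormedAddCommGroup F] [NormedSpace ℝ F] (f : E → F) (x : E) :
    ‖iteratedFDeriv ℝ 2 f x‖ = ‖fderiv ℝ (fderiv ℝ f) x‖ := by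
  rw [← norm_iteratedFDeriv_fderiv, norm_iteratedFDeriv_one]

theorem statement15_general (f u : E2 → ℝ) (hf : ContDiff ℝ 2 f)
    (hpos : ∀ p q : E2, q ≠ 0 → 0 < Hess f p q) (hu : ContDiff ℝ 2 u) (heq : solves f u)
    (E : E2) (hE : E ≠ 0) (Φ : ℝ → ℝ) (hΦ : ContDiff ℝ 1 Φ) (hΦ' : ∀ s, 0 < deriv Φ s)
    (M : ℝ) (hM : ∀ s, |Φ s| ≤ M) (C : ℝ)
    (hC : ∀ x : E2, ‖iteratedFDeriv ℝ 2 f (gradient u x)‖ ≤ C * deriv Φ (fderiv ℝ u x E)) :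
    ∃ a b c : ℝ, ∀ x : E2, u x = a * x 0 + b * x 1 + c := by
  have hpos' : ∀ p q : E2, q ≠ 0 → 0 < fderiv ℝ (fderiv ℝ f) p q q := fun p q hq => by
    simpa [Hess, iteratedFDeriv_two_apply] using hpos p q hq
  have heq' : ∀ x : E2, ∑ i, fderiv ℝ (fun y => fderiv ℝ f (gradient u y)
      (EuclideanSpace.basisFun (Fin 2) ℝ i)) x (EuclideanSpace.basisFun (Fin 2) ℝ i) = 0 := by
    simpa only [EuclideanSpace.basisFun_apply, solves, ee] using heq
  have hD2u : ∀ x, fderiv ℝ (gradient u) x = 0 :=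
    fderiv_gradient_eq_zero_of_norm_fderiv_fderiv_le finrank_euclideanSpace_fin
      (EuclideanSpace.basisFun (Fin 2) ℝ) hf hpos' hu heq' hE hΦ hΦ' hM
      (by simpa only [norm_iteratedFDeriv_two] using hC)
  refine ⟨gradient u 0 0, gradient u 0 1, u 0, fun x => ?_⟩
  rw [eq_inner_gradient_add_of_fderiv_gradient_eq_zero hu hD2u x, PiLp.inner_apply,
    Fin.sum_univ_two]
  simp only [RCLike.inner_apply, conj_trivial, mul_comm]

theorem statement15 (f u : E2 → ℝ)
    (hf : ContDiff ℝ 2 f)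
    (hpos : ∀ p q : E2, q ≠ 0 → 0 < Hess f p q)
    (Lam : ℝ) (hLam : 0 < Lam)
    (hgrow : ∀ p : E2, ‖iteratedFDeriv ℝ 2 f p‖ ≤ Lam / (1 + ‖p‖))
    (hu : ContDiff ℝ 2 u) (heq : solves f u)
    (E₁ E₂ : E2) (hli : LinearIndependent ℝ ![E₁, E₂])
    (K : ℝ) (hK : 0 < K)
    (hbd : ∀ x : E2, |fderiv ℝ u x E₁| * (Real.log (1 + |fderiv ℝ u x E₁|)) ^ 2 ≤
      K * (|fderiv ℝ u x E₂| + 1)) :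
    ∃ a b c : ℝ, ∀ x : E2, u x = a * x 0 + b * x 1 + c :=
  statement15_general f u hf hpos hu heq E₁ (hli.ne_zero 0) _ contDiff_arctan_arsinh
    deriv_arctan_arsinh_pos (π / 2) abs_arctan_arsinh_le (Lam * (14 * (1 + K * (1 + ‖E₂‖))))
    fun x => (hgrow _).trans <| (mul_le_mul_of_nonneg_left
      (inv_one_add_norm_gradient_le_mul_deriv_arctan_arsinh hK.le (hbd x)) hLam.le).trans_eq
        (mul_assoc _ _ _).symm
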